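/- arXiv:1707.05581 — 4 statements merged into one kernel-verified Lean document; each statement's English description precedes it below -/
import Mathlib

section
/- Let X be a geodesic metric space. For each C > 1 and ρ ∈ (0,1] there is a constant L = L(C,ρ) ≥ 1 such that the following holds: for every r > 0 and every continuous rectifiable path γ in X of length less than Cr whose endpoints x and y satisfy d(x,y) ≥ r, there is an (L,0)-quasi-geodesic α connecting x and y such that the image of α lies in the ρr-neighborhood of the image of γ and the length of α is at most the length of γ. -/
/-!
The path is straightened by adding one short geodesic at a time. Suppose `α` is a
`1`-Lipschitz path with lower bi-Lipschitz constant `1/K`, and let `q` be any point. Let `α z`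
be a point of `α` closest to `q`, and replace the part of `α` after `z` by a geodesic from
`α z` to `q`. For `u` on `α` and `v` on this geodesic, minimality of `α z` gives
`d(α z, v) ≤ d(u, v)`, hence `d(u, α z) + d(α z, v) ≤ 3 d(u, v)`, so the new path has lower
constant `1/(3K)` (`extend_biLipschitz`). Moreover `d(α z, q)` is at most the distance from
the old endpoint of `α` to `q`; so if both are points of `γ` at distance at most `δ`, the
new points lie within `δ` of `γ`, and the length grows by at most the length of the
corresponding piece of `γ`.

A path `γ` of length at most `n δ` is covered by `n` such steps
(`exists_biLipschitz_of_eVariationOn_le`). With `δ = ρ r / 2`, the number `n` of steps depends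
only on `C` and `ρ`, and `L = 3 ^ n` works.
-/

open Metric Set Pointwise
open scoped ENNReal

noncomputable section

/-- The `(K,C)`-quasi-isometric-embedding inequalities for a map `γ : ℝ → X`
restricted to a subset `s ⊆ ℝ`; for `s` an interval this is the notion of a
`(K,C)`-quasi-geodesic. -/
def QIEmbedOn {X : Type*} [MetricSpace X] (γ : ℝ → X) (s : Set ℝ) (K C : ℝ) : Prop :=
  ∀ a ∈ s, ∀ b ∈ s,
    (1 / K) * |a - b| - C ≤ dist (γ a) (γ b) ∧ dist (γ a) (γ b) ≤ K * |a - b| + C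

/-- `Φ` is a `(K,L)`-quasi-isometric embedding. -/
def QIEmbeddingWith {A X : Type*} [MetricSpace A] [MetricSpace X] (Φ : A → X)
    (K L : ℝ) : Prop :=
  1 ≤ K ∧ 0 ≤ L ∧ ∀ a b : A,
    (1 / K) * dist a b - L ≤ dist (Φ a) (Φ b) ∧ dist (Φ a) (Φ b) ≤ K * dist a b + L

/-- `Φ` is a quasi-isometric embedding. -/
def IsQIEmbedding {A X : Type*} [MetricSpace A] [MetricSpace X] (Φ : A → X) : Prop :=
  ∃ K L : ℝ, QIEmbeddingWith Φ K L

/-- A metric space is geodesic if every pair of points is joined by an isometrically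
parametrized segment. -/
def IsGeodesicSpace (X : Type*) [MetricSpace X] : Prop :=
  ∀ x y : X, ∃ γ : ℝ → X, γ 0 = x ∧ γ (dist x y) = y ∧
    ∀ s ∈ Icc (0 : ℝ) (dist x y), ∀ t ∈ Icc (0 : ℝ) (dist x y), dist (γ s) (γ t) = |s - t|

/-- A subset `A` is Morse: every `(K,C)`-quasi-geodesic with endpoints on `A` stays in a
uniform `M = M(K,C)` neighborhood of `A`. -/
def IsMorse {X : Type*} [MetricSpace X] (A : Set X) : Prop :=
  ∀ K C : ℝ, 1 ≤ K → 0 ≤ C → ∃ M : ℝ, 0 ≤ M ∧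
    ∀ (γ : ℝ → X) (a b : ℝ), a ≤ b → QIEmbedOn γ (Icc a b) K C →
      γ a ∈ A → γ b ∈ A → ∀ t ∈ Icc a b, infDist (γ t) A ≤ M

/-- `A` is Morse with the specific Morse gauge `N`. -/
def MorseWithGauge {X : Type*} [MetricSpace X] (A : Set X) (N : ℝ → ℝ → ℝ) : Prop :=
  ∀ K C : ℝ, 1 ≤ K → 0 ≤ C →
    ∀ (γ : ℝ → X) (a b : ℝ), a ≤ b → QIEmbedOn γ (Icc a b) K C →
      γ a ∈ A → γ b ∈ A → ∀ t ∈ Icc a b, infDist (γ t) A ≤ N K C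

/-- A subset `A ⊆ X` is stable: any two `(K,L)`-quasi-geodesics with the same endpoints
on `A` are at uniformly bounded Hausdorff distance `R = R(K,L)`. -/
def IsStableSubset {X : Type*} [MetricSpace X] (A : Set X) : Prop :=
  ∀ K L : ℝ, 1 ≤ K → 0 ≤ L → ∃ R : ℝ, 0 ≤ R ∧
    ∀ (γ γ' : ℝ → X) (a b a' b' : ℝ), a ≤ b → a' ≤ b' →
      QIEmbedOn γ (Icc a b) K L → QIEmbedOn γ' (Icc a' b') K L →
      γ a = γ' a' → γ b = γ' b' → γ a ∈ A → γ b ∈ A →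
      hausdorffDist (γ '' Icc a b) (γ' '' Icc a' b') < R

/-- `s` is (the image of) a geodesic segment from `x` to `y`. -/
def IsGeodesicSegment {X : Type*} [MetricSpace X] (s : Set X) (x y : X) : Prop :=
  ∃ γ : ℝ → X, γ 0 = x ∧ γ (dist x y) = y ∧ s = γ '' Icc 0 (dist x y) ∧
    ∀ u ∈ Icc (0 : ℝ) (dist x y), ∀ v ∈ Icc (0 : ℝ) (dist x y), dist (γ u) (γ v) = |u - v|

/-- `X` is (Gromov) hyperbolic: there is `δ ≥ 0` such that every geodesic triangle is
`δ`-thin (each side lies in the `δ`-neighborhood of the union of the other two sides). -/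
def IsHyperbolic (X : Type*) [MetricSpace X] : Prop :=
  ∃ δ : ℝ, 0 ≤ δ ∧ ∀ x y z : X, ∀ s₁ s₂ s₃ : Set X,
    IsGeodesicSegment s₁ x y → IsGeodesicSegment s₂ y z → IsGeodesicSegment s₃ x z →
    ∀ p ∈ s₃, infDist p (s₁ ∪ s₂) ≤ δ

/-- The induced length (pseudo)distance `d_r(x,y)` on the complement of the open
`r`-neighborhood of `A`: the infimum of lengths of paths from `x` to `y` staying at
distance at least `r` from `A` (with value `∞` if there is no such path). -/
def relPathDist {X : Type*} [MetricSpace X] (A : Set X) (r : ℝ) (x y : X) : ℝ≥0∞ :=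
  ⨅ (γ : ℝ → X) (a : ℝ) (b : ℝ) (_ : a ≤ b) (_ : ContinuousOn γ (Icc a b))
    (_ : γ a = x) (_ : γ b = y) (_ : ∀ t ∈ Icc a b, r ≤ infDist (γ t) A),
    eVariationOn γ (Icc a b)

/-- The lower relative divergence `σ^n_ρ(r)` of `X` with respect to `A`:
the infimum of `d_{ρr}(x,y)` over `x, y ∈ ∂N_r(A)` with `d_r(x,y) < ∞` and
`d(x,y) ≥ n r` (and `∞` if there is no such pair). -/
def lowerRelDiv {X : Type*} [MetricSpace X] (A : Set X) (n : ℕ) (ρ r : ℝ) : ℝ≥0∞ :=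
  ⨅ (x : X) (y : X) (_ : infDist x A = r) (_ : infDist y A = r)
    (_ : relPathDist A r x y ≠ ⊤) (_ : (n : ℝ) * r ≤ dist x y),
    relPathDist A (ρ * r) x y

/-- `f : [0,∞) → [0,∞]` is completely super linear: for each `C > 0` the set of `x ≥ 0`
with `f x ≤ C x` is bounded. -/
def CompletelySuperLinear (f : ℝ → ℝ≥0∞) : Prop :=
  ∀ C : ℝ, 0 < C → ∃ B : ℝ, ∀ x : ℝ, 0 ≤ x → f x ≤ ENNReal.ofReal (C * x) → x ≤ B

/-- A family `{σ^n_ρ}` is completely super linear if there is `n₀ ≥ 3` such that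
`σ^{n₀}_ρ` is completely super linear for every `ρ ∈ (0,1]`. -/
def FamilyCSL (σ : ℕ → ℝ → ℝ → ℝ≥0∞) : Prop :=
  ∃ n₀ : ℕ, 3 ≤ n₀ ∧ ∀ ρ : ℝ, 0 < ρ → ρ ≤ 1 → CompletelySuperLinear (σ n₀ ρ)

/-- `f` is dominated by `g` : `f(x) ≤ A g(Bx) + Cx` for all `x > D`. -/
def FunDominatedBy (f g : ℝ → ℝ≥0∞) : Prop :=
  ∃ A B C D : ℝ, 0 < A ∧ 0 < B ∧ 0 < C ∧ 0 < D ∧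
    ∀ x : ℝ, D < x → f x ≤ ENNReal.ofReal A * g (B * x) + ENNReal.ofReal (C * x)

/-- The quadratic function `r ↦ r²` viewed in `[0,∞]`. -/
def quadFun : ℝ → ℝ≥0∞ := fun r => ENNReal.ofReal (r ^ 2)

/-- The family `{σ^n_ρ}` dominates the function `f` (i.e. the constant family `f` is
dominated by `{σ^n_ρ}`): there are `L ∈ (0,1]` and a positive integer `M` such that
`f ≼ σ^{Mn}_ρ` for all `n ≥ 2`, `ρ ∈ (0,1]`. -/
def FamilyDominatesFun (σ : ℕ → ℝ → ℝ → ℝ≥0∞) (f : ℝ → ℝ≥0∞) : Prop :=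
  ∃ (L : ℝ) (M : ℕ), 0 < L ∧ L ≤ 1 ∧ 0 < M ∧
    ∀ n : ℕ, 2 ≤ n → ∀ ρ : ℝ, 0 < ρ → ρ ≤ 1 → FunDominatedBy f (σ (M * n) ρ)

/-- The family `{σ^n_ρ}` is dominated by the function `f`: there are `L ∈ (0,1]` and a
positive integer `M` such that `σ^n_{Lρ} ≼ f` for all `n ≥ 2`, `ρ ∈ (0,1]`. -/
def FamilyDominatedByFun (σ : ℕ → ℝ → ℝ → ℝ≥0∞) (f : ℝ → ℝ≥0∞) : Prop :=
  ∃ (L : ℝ) (M : ℕ), 0 < L ∧ L ≤ 1 ∧ 0 < M ∧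
    ∀ n : ℕ, 2 ≤ n → ∀ ρ : ℝ, 0 < ρ → ρ ≤ 1 → FunDominatedBy (σ n (L * ρ)) f

/-- The family is at least quadratic. -/
def FamilyAtLeastQuadratic (σ : ℕ → ℝ → ℝ → ℝ≥0∞) : Prop :=
  FamilyDominatesFun σ quadFun

/-- The family is (exactly) quadratic. -/
def FamilyQuadratic (σ : ℕ → ℝ → ℝ → ℝ≥0∞) : Prop :=
  FamilyDominatesFun σ quadFun ∧ FamilyDominatedByFun σ quadFun

/-- Word length of `g` with respect to a generating set `S` (letters from `S ∪ S⁻¹`). -/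
def wordLength {G : Type*} [Group G] (S : Set G) (g : G) : ℕ :=
  sInf {n : ℕ | ∃ w : List G, w.length = n ∧ (∀ x ∈ w, x ∈ S ∨ x⁻¹ ∈ S) ∧ w.prod = g}

/-- The word metric on `G` with respect to `S`. -/
def wordDist {G : Type*} [Group G] (S : Set G) (g h : G) : ℝ :=
  (wordLength S (g⁻¹ * h) : ℝ)

/-- The distance `d_S(g, A)` from `g` to a subset `A ⊆ G` in the word metric. -/
def wordDistToSet {G : Type*} [Group G] (S : Set G) (g : G) (A : Set G) : ℕ :=
  sInf {n : ℕ | ∃ a ∈ A, wordLength S (g⁻¹ * a) = n}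

/-- `X`, together with the vertex map `ι : G → X`, is a geometric model for the Cayley
graph `Γ(G,S)`: `X` is geodesic, `ι` realizes the word metric on the vertex set, and every
point of `X` is within `1/2` of a vertex (as in the unit-edge-length Cayley graph). -/
def CayleyModel (G : Type*) [Group G] (S : Set G) (X : Type*) [MetricSpace X]
    (ι : G → X) : Prop :=
  IsGeodesicSpace X ∧ (∀ g h : G, dist (ι g) (ι h) = wordDist S g h) ∧
    ∀ x : X, ∃ g : G, dist x (ι g) ≤ 1 / 2

/-- `H ≤ G` is strongly quasiconvex: `H` is a Morse subset of the Cayley graph of `G`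
with respect to some (equivalently, any) finite generating set. -/
def StronglyQuasiconvex {G : Type*} [Group G] (H : Subgroup G) : Prop :=
  ∀ S : Set G, S.Finite → Subgroup.closure S = ⊤ →
    ∀ (X : Type) [MetricSpace X], ∀ ι : G → X, CayleyModel G S X ι →
      IsMorse (ι '' (H : Set G))

/-- `H` is a finitely generated undistorted subgroup of `G` (with respect to the word
metric of the finite generating set `S` of `G`): the inclusion `(H,d_T) → (G,d_S)` is a
quasi-isometric embedding for some finite generating set `T` of `H`. -/
def Undistorted {G : Type*} [Group G] (S : Set G) (H : Subgroup G) : Prop :=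
  ∃ T : Set H, T.Finite ∧ Subgroup.closure T = ⊤ ∧
    ∃ K L : ℝ, 1 ≤ K ∧ 0 ≤ L ∧ ∀ h₁ h₂ : H,
      (1 / K) * wordDist T h₁ h₂ - L ≤ wordDist S (h₁ : G) (h₂ : G) ∧
      wordDist S (h₁ : G) (h₂ : G) ≤ K * wordDist T h₁ h₂ + L

/-- `H` is a stable subgroup of `G`: `H` is finitely generated and undistorted, and its
image in (a model `X` of) the Cayley graph `Γ(G,S)` is a stable subset. -/
def StableIn {G : Type*} [Group G] (S : Set G) (H : Subgroup G) (X : Type*)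
    [MetricSpace X] (ι : G → X) : Prop :=
  Undistorted S H ∧ IsStableSubset (ι '' (H : Set G))

/-- A group is hyperbolic if its Cayley graph with respect to some (equivalently, any)
finite generating set is a hyperbolic geodesic space. -/
def IsHyperbolicGroup (H : Type*) [Group H] : Prop :=
  ∀ T : Set H, T.Finite → Subgroup.closure T = ⊤ →
    ∀ (Y : Type) [MetricSpace Y], ∀ ι : H → Y, CayleyModel H T Y ι → IsHyperbolic Y

/-- A geodesic ray in `X` (isometric embedding of `[0,∞)`). -/
def IsGeodesicRay {X : Type*} [MetricSpace X] (γ : ℝ → X) : Prop :=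
  ∀ s ∈ Ici (0 : ℝ), ∀ t ∈ Ici (0 : ℝ), dist (γ s) (γ t) = |s - t|

/-- `γ` restricted to `[a,b]` is a geodesic (isometric parametrization). -/
def IsGeodesicOn {X : Type*} [MetricSpace X] (γ : ℝ → X) (a b : ℝ) : Prop :=
  ∀ s ∈ Icc a b, ∀ t ∈ Icc a b, dist (γ s) (γ t) = |s - t|

/-- `γ` is parametrized by arc length on `[a,b]`. -/
def ArcLengthParamOn {X : Type*} [MetricSpace X] (γ : ℝ → X) (a b : ℝ) : Prop :=
  ∀ s t : ℝ, a ≤ s → s ≤ t → t ≤ b → eVariationOn γ (Icc s t) = ENNReal.ofReal (t - s)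

/-- Relations of a right-angled Coxeter group on a simplicial graph `Γ`. -/
def racgRels {V : Type} (Γ : SimpleGraph V) : Set (FreeGroup V) :=
  {rel | (∃ v : V, rel = FreeGroup.of v * FreeGroup.of v) ∨
    (∃ v w : V, Γ.Adj v w ∧
      rel = FreeGroup.of v * FreeGroup.of w * (FreeGroup.of v)⁻¹ * (FreeGroup.of w)⁻¹)}

/-- The right-angled Coxeter group associated to a finite simplicial graph `Γ`. -/
abbrev RACG {V : Type} (Γ : SimpleGraph V) : Type := PresentedGroup (racgRels Γ)

/-- The standard generator of `RACG Γ` corresponding to a vertex. -/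
def racgGen {V : Type} (Γ : SimpleGraph V) (v : V) : RACG Γ := PresentedGroup.of v

/-- Relations of a right-angled Artin group on a simplicial graph `Γ`. -/
def raagRels {V : Type} (Γ : SimpleGraph V) : Set (FreeGroup V) :=
  {rel | ∃ v w : V, Γ.Adj v w ∧
    rel = FreeGroup.of v * FreeGroup.of w * (FreeGroup.of v)⁻¹ * (FreeGroup.of w)⁻¹}

/-- The right-angled Artin group associated to a finite simplicial graph `Γ`. -/
abbrev RAAG {V : Type} (Γ : SimpleGraph V) : Type := PresentedGroup (raagRels Γ)

/-- The standard generator of `RAAG Γ` corresponding to a vertex. -/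
def raagGen {V : Type} (Γ : SimpleGraph V) (v : V) : RAAG Γ := PresentedGroup.of v

/-- `a b c d` (in this cyclic order) form an induced `4`-cycle of `Γ`. -/
def InducedFourCycle {V : Type} (Γ : SimpleGraph V) (a b c d : V) : Prop :=
  a ≠ b ∧ a ≠ c ∧ a ≠ d ∧ b ≠ c ∧ b ≠ d ∧ c ≠ d ∧
  Γ.Adj a b ∧ Γ.Adj b c ∧ Γ.Adj c d ∧ Γ.Adj d a ∧ ¬ Γ.Adj a c ∧ ¬ Γ.Adj b d

/-- Truncating a path at a point nearest to `q` and continuing along a geodesic to `q`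
multiplies the lower bi-Lipschitz constant by at most `3`. -/
lemma extend_biLipschitz {X : Type*} [MetricSpace X] (hX : IsGeodesicSpace X)
    {K : ℝ} (hK : 1 ≤ K) {α : ℝ → X} {T : ℝ} (hT : 0 ≤ T)
    (hα : ∀ s ∈ Icc 0 T, ∀ t ∈ Icc 0 T, s ≤ t →
      t - s ≤ K * dist (α s) (α t) ∧ dist (α s) (α t) ≤ t - s) (q : X) :
    ∃ (α' : ℝ → X) (T' : ℝ), 0 ≤ T' ∧ T' ≤ T + dist (α T) q ∧
      (∀ s ∈ Icc 0 T', ∀ t ∈ Icc 0 T', s ≤ t →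
        t - s ≤ 3 * K * dist (α' s) (α' t) ∧ dist (α' s) (α' t) ≤ t - s) ∧
      α' 0 = α 0 ∧ α' T' = q ∧
      ∀ t ∈ Icc 0 T', (∃ s ∈ Icc 0 T, α' t = α s) ∨ dist (α' t) q ≤ dist (α T) q := by
  have hcont : ContinuousOn α (Icc 0 T) := by
    have hl : LipschitzOnWith 1 α (Icc 0 T) := by
      refine LipschitzOnWith.of_dist_le_mul fun s hs t ht => ?_
      rw [NNReal.coe_one, one_mul, Real.dist_eq]
      rcases le_total s t with h | h
      · rw [abs_sub_comm]
        exact (hα s hs t ht h).2.trans (le_abs_self _)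
      · rw [dist_comm]
        exact (hα t ht s hs h).2.trans (le_abs_self _)
    exact hl.continuousOn
  obtain ⟨z, hz, hmin⟩ := isCompact_Icc.exists_isMinOn (nonempty_Icc.2 hT)
    ((continuous_id.dist continuous_const).comp_continuousOn hcont : ContinuousOn (fun t => dist (α t) q) (Icc 0 T))
  have hmin' : ∀ t ∈ Icc 0 T, dist (α z) q ≤ dist (α t) q := fun t ht => hmin ht
  obtain ⟨β, hβ0, hβ1, hβ⟩ := hX (α z) q
  set D := dist (α z) q with hD
  have hD0 : 0 ≤ D := dist_nonneg
  have hDT : D ≤ dist (α T) q := hmin' T ⟨hT, le_rfl⟩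
  have hβd : ∀ v ∈ Icc 0 D, dist (α z) (β v) = v ∧ dist (β v) q = D - v := by
    intro v hv
    constructor
    · rw [← hβ0, hβ 0 ⟨le_rfl, hD0⟩ v hv, zero_sub, abs_neg, abs_of_nonneg hv.1]
    · nth_rewrite 1 [← hβ1]
      rw [hβ v hv D ⟨hD0, le_rfl⟩, abs_sub_comm, abs_of_nonneg (sub_nonneg.2 hv.2)]
  refine ⟨fun t => if t ≤ z then α t else β (t - z), z + D, by linarith [hz.1],
    by linarith [hz.2], ?_, ?_, ?_, ?_⟩
  · intro s hs t ht hst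
    by_cases h1 : t ≤ z
    · have h2 : s ≤ z := hst.trans h1
      simp only [h1, h2, if_true]
      have h := hα s ⟨hs.1, h2.trans hz.2⟩ t ⟨ht.1, h1.trans hz.2⟩ hst
      refine ⟨?_, h.2⟩
      nlinarith [@dist_nonneg _ _ (α s) (α t)]
    · have hv : t - z ∈ Icc 0 D := ⟨by linarith, by linarith [ht.2]⟩
      by_cases h2 : s ≤ z
      · simp only [h1, h2, if_true, if_false]
        have hs' : s ∈ Icc 0 T := ⟨hs.1, h2.trans hz.2⟩
        have h := hα s hs' z hz h2
        have hb := hβd _ hv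
        have hm := hmin' s hs'
        have t1 := dist_triangle (α s) (β (t - z)) q
        have t2 := dist_triangle (α s) (β (t - z)) (α z)
        have t3 := dist_triangle (α s) (α z) (β (t - z))
        rw [dist_comm (β (t - z)) (α z)] at t2
        refine ⟨?_, by linarith⟩
        have e1 : dist (α s) (α z) ≤ 2 * dist (α s) (β (t - z)) := by linarith
        have e2 : t - z ≤ dist (α s) (β (t - z)) := by linarith
        have e3 := mul_le_mul_of_nonneg_left e1 (by linarith : (0 : ℝ) ≤ K)
        have e4 : dist (α s) (β (t - z)) ≤ K * dist (α s) (β (t - z)) :=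
          le_mul_of_one_le_left dist_nonneg hK
        linarith [h.1]
      · simp only [h1, h2, if_false]
        have hu : s - z ∈ Icc 0 D := ⟨by linarith, by linarith [hs.2]⟩
        rw [hβ _ hu _ hv, abs_sub_comm, abs_of_nonneg (by linarith)]
        refine ⟨?_, by linarith⟩
        nlinarith
  · simp [hz.1]
  · by_cases h : D ≤ 0
    · have h0 : D = 0 := le_antisymm h hD0
      have : α z = q := dist_eq_zero.1 (hD.symm.trans h0)
      simp [h0, this]
    · simp [h, hβ1]
  · intro t ht
    by_cases h1 : t ≤ z
    · left
      exact ⟨t, ⟨ht.1, h1.trans hz.2⟩, by simp [h1]⟩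
    · right
      have hv : t - z ∈ Icc 0 D := ⟨by linarith, by linarith [ht.2]⟩
      simp only [h1, if_false]
      linarith [(hβd _ hv).2, hv.1]

/-- A path of length at most `n δ` can be straightened, within its closed `δ`-neighborhood,
to a `1`-Lipschitz path with lower bi-Lipschitz constant `3⁻ⁿ`. The right endpoint `c` varies
because the induction on `n` passes to initial subpaths of `γ`. -/
lemma exists_biLipschitz_of_eVariationOn_le {X : Type*} [MetricSpace X]
    (hX : IsGeodesicSpace X) {δ : ℝ} (hδ : 0 < δ) {γ : ℝ → X} {a b : ℝ}
    (hγ : ContinuousOn γ (Icc a b)) (n : ℕ) :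
    ∀ c ∈ Icc a b, eVariationOn γ (Icc a c) ≤ n * ENNReal.ofReal δ →
      ∃ (α : ℝ → X) (T : ℝ), 0 ≤ T ∧ ENNReal.ofReal T ≤ eVariationOn γ (Icc a c) ∧
        (∀ s ∈ Icc 0 T, ∀ t ∈ Icc 0 T, s ≤ t →
          t - s ≤ 3 ^ n * dist (α s) (α t) ∧ dist (α s) (α t) ≤ t - s) ∧
        α 0 = γ a ∧ α T = γ c ∧
        ∀ t ∈ Icc 0 T, infDist (α t) (γ '' Icc a b) ≤ δ := by
  induction n with
  | zero =>
    intro c hc hv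
    have h0 : edist (γ a) (γ c) ≤ 0 := by
      refine (eVariationOn.edist_le γ (s := Icc a c) ⟨le_rfl, hc.1⟩ ⟨hc.1, le_rfl⟩).trans ?_
      simpa using hv
    have h1 : γ a = γ c := edist_le_zero.1 h0
    refine ⟨fun _ => γ a, 0, le_rfl, by simp, ?_, rfl, h1, ?_⟩
    · intro s hs t ht hst
      simp only [dist_self, mul_zero]
      exact ⟨by linarith [hs.1, ht.2], by linarith⟩
    · intro t _
      rw [infDist_zero_of_mem (mem_image_of_mem γ (⟨le_rfl, hc.1.trans hc.2⟩ : a ∈ Icc a b))]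
      exact hδ.le
  | succ n ih =>
    intro c hc hv
    have hsub : Icc a c ⊆ Icc a b := Icc_subset_Icc_right hc.2
    -- The new vertex is a point `c'` at distance exactly `δ` from `γ c`, which uses up `δ` of
    -- the length; if there is none, `γ a` is itself within `δ` of `γ c`.
    obtain ⟨c', hc', hd, hv'⟩ : ∃ c' ∈ Icc a c, dist (γ c') (γ c) ≤ δ ∧
        eVariationOn γ (Icc a c') ≤ n * ENNReal.ofReal δ := by
      by_cases h : dist (γ a) (γ c) ≤ δ
      · refine ⟨a, ⟨le_rfl, hc.1⟩, h, ?_⟩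
        rw [eVariationOn.subsingleton γ (by simp)]
        exact zero_le
      · have hf : ContinuousOn (fun t => dist (γ t) (γ c)) (Icc a c) :=
          (continuous_id.dist continuous_const).comp_continuousOn (hγ.mono hsub)
        obtain ⟨c', hc', hd⟩ := intermediate_value_Icc' hc.1 hf
          ⟨by simpa using hδ.le, (not_le.1 h).le⟩
        refine ⟨c', hc', le_of_eq hd, ?_⟩
        have hadd := eVariationOn.Icc_add_Icc γ (s := univ) hc'.1 hc'.2 (mem_univ _)
        simp only [univ_inter] at hadd
        have hed := eVariationOn.edist_le γ (s := Icc c' c)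
          (⟨le_rfl, hc'.2⟩ : c' ∈ Icc c' c) (⟨hc'.2, le_rfl⟩ : c ∈ Icc c' c)
        have hd' : dist (γ c') (γ c) = δ := hd
        rw [edist_dist, hd'] at hed
        have : eVariationOn γ (Icc a c') + ENNReal.ofReal δ
            ≤ n * ENNReal.ofReal δ + ENNReal.ofReal δ := by
          calc _ ≤ eVariationOn γ (Icc a c) := by rw [← hadd]; gcongr
            _ ≤ _ := by rw [Nat.cast_succ, add_mul, one_mul] at hv; exact hv
        exact (ENNReal.add_le_add_iff_right ENNReal.ofReal_ne_top).1 this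
    obtain ⟨α, T, hT, hTv, hα, hα0, hαT, hαn⟩ := ih c' (hsub hc') hv'
    obtain ⟨α', T', hT', hTT, hq, h0, h1, hn⟩ :=
      extend_biLipschitz hX (one_le_pow₀ (by norm_num)) hT hα (γ c)
    refine ⟨α', T', hT', ?_, ?_, h0.trans hα0, h1, ?_⟩
    · have hadd := eVariationOn.Icc_add_Icc γ (s := univ) hc'.1 hc'.2 (mem_univ _)
      simp only [univ_inter] at hadd
      have hed := eVariationOn.edist_le γ (s := Icc c' c)
        (⟨le_rfl, hc'.2⟩ : c' ∈ Icc c' c) (⟨hc'.2, le_rfl⟩ : c ∈ Icc c' c)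
      rw [edist_dist] at hed
      calc ENNReal.ofReal T' ≤ ENNReal.ofReal (T + dist (γ c') (γ c)) :=
            ENNReal.ofReal_le_ofReal (hαT ▸ hTT)
        _ = ENNReal.ofReal T + ENNReal.ofReal (dist (γ c') (γ c)) :=
            ENNReal.ofReal_add hT dist_nonneg
        _ ≤ _ := by rw [← hadd]; gcongr
    · intro s hs t ht hst
      rw [pow_succ' 3 n]
      exact hq s hs t ht hst
    · intro t ht
      rcases hn t ht with ⟨s, hs, he⟩ | h
      · rw [he]
        exact hαn s hs
      · rw [hαT] at h
        exact (infDist_le_dist_of_mem (mem_image_of_mem γ hc)).trans (h.trans hd)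

/-- Straightening a continuous rectifiable path: for each `C > 1` and `ρ ∈ (0,1]` there is
`L = L(C,ρ) ≥ 1` such that every continuous path of length less than `Cr` whose endpoints
are at distance at least `r` can be replaced by an `(L,0)`-quasi-geodesic with the same
endpoints, lying in the `ρr`-neighborhood of the path, of length at most that of the path. -/
theorem straighten_path_to_quasigeodesic
    {X : Type*} [MetricSpace X] (hX : IsGeodesicSpace X)
    (C ρ : ℝ) (hC : 1 < C) (hρ₀ : 0 < ρ) (hρ₁ : ρ ≤ 1) :
    ∃ L : ℝ, 1 ≤ L ∧ ∀ r : ℝ, 0 < r → ∀ (γ : ℝ → X) (a b : ℝ), a ≤ b →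
      ContinuousOn γ (Icc a b) →
      eVariationOn γ (Icc a b) < ENNReal.ofReal (C * r) →
      r ≤ dist (γ a) (γ b) →
      ∃ (α : ℝ → X) (a' b' : ℝ), a' ≤ b' ∧ QIEmbedOn α (Icc a' b') L 0 ∧
        α a' = γ a ∧ α b' = γ b ∧
        (∀ t ∈ Icc a' b', infDist (α t) (γ '' Icc a b) < ρ * r) ∧
        eVariationOn α (Icc a' b') ≤ eVariationOn γ (Icc a b) := by
  obtain ⟨n, hn⟩ := exists_nat_ge (2 * C / ρ)
  have hL : (1 : ℝ) ≤ 3 ^ n := one_le_pow₀ (by norm_num)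
  refine ⟨3 ^ n, hL, ?_⟩
  intro r hr γ a b hab hγ hlen _
  have hδ : 0 < ρ * r / 2 := by positivity
  have hlen' : eVariationOn γ (Icc a b) ≤ n * ENNReal.ofReal (ρ * r / 2) := by
    refine hlen.le.trans ?_
    rw [← ENNReal.ofReal_natCast n, ← ENNReal.ofReal_mul (Nat.cast_nonneg n)]
    apply ENNReal.ofReal_le_ofReal
    rw [div_le_iff₀ hρ₀] at hn
    nlinarith
  obtain ⟨α, T, hT, hTv, hα, h0, h1, hn'⟩ :=
    exists_biLipschitz_of_eVariationOn_le hX hδ hγ n b ⟨hab, le_rfl⟩ hlen'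
  have hqi : ∀ s ∈ Icc 0 T, ∀ t ∈ Icc 0 T,
      |s - t| ≤ 3 ^ n * dist (α s) (α t) ∧ dist (α s) (α t) ≤ |s - t| := by
    intro s hs t ht
    rcases le_total s t with h | h
    · rw [abs_sub_comm, abs_of_nonneg (sub_nonneg.2 h)]
      exact hα s hs t ht h
    · rw [abs_of_nonneg (sub_nonneg.2 h), dist_comm]
      exact hα t ht s hs h
  refine ⟨α, 0, T, hT, ?_, h0, h1, fun t ht => (hn' t ht).trans_lt (by linarith), ?_⟩
  · intro s hs t ht
    have h := hqi s hs t ht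
    rw [sub_zero, add_zero, one_div, inv_mul_le_iff₀ (by positivity)]
    exact ⟨h.1, h.2.trans (le_mul_of_one_le_left (abs_nonneg _) hL)⟩
  -- A `1`-Lipschitz path parametrized by `[0, T]` has length at most `T`.
  · have hl : LipschitzOnWith 1 α (Icc 0 T) :=
      LipschitzOnWith.of_dist_le_mul fun s hs t ht => by
        rw [NNReal.coe_one, one_mul, Real.dist_eq]
        exact (hqi s hs t ht).2
    have h2 := hl.comp_eVariationOn_le (g := fun t : ℝ => t) (s := Icc 0 T) (fun t ht => ht)
    have h3 := (monotoneOn_id (α := ℝ) (s := Icc 0 T)).eVariationOn_eq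
      (⟨le_rfl, hT⟩ : (0 : ℝ) ∈ Icc 0 T) (⟨hT, le_rfl⟩ : T ∈ Icc 0 T)
    rw [inter_self, id, id, sub_zero] at h3
    rw [ENNReal.coe_one, one_mul] at h2
    exact h2.trans (h3.le.trans hTv)
end
end

section
/- Let γ = γ₁γ₂γ₃ be the concatenation of three geodesics γ₁, γ₂, γ₃ in a geodesic metric space. If there is a number r > 0 such that the length of γ₁ is less than r, the length of γ₂ equals 20r, and the length of γ₃ is less than r, then there is a (5,0)-quasi-geodesic α with the same endpoints as γ whose image has nonempty intersection with the image of γ₂. -/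
/-!
The path `α` comes from replacing the two outer geodesics by shortest segments onto the middle
one. Let `γ u` and `γ v` be points of the middle geodesic closest to the endpoints `γ a` and
`γ b`; they exist by compactness. Both projection distances are below `r`, so `γ u` and `γ v` lie
within `2r` of the respective ends of the middle geodesic and `16r < v - u`. Take `α` to be a
geodesic `γ a → γ u`, followed by `γ` on `[u, v]`, followed by a geodesic `γ v → γ b`,
parametrized by arc length.

Such a path is `1`-Lipschitz. For the lower bound, a point `x` of the first segment still has
`γ u` as a nearest point on the middle geodesic, so for `y = γ t` both `dist x (γ u)` and
`(t - u) - dist x (γ u)` are at most `dist x y`; hence the length of `α` between them is at most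
`3 * dist x y` (`corner_bound`). Points on the two outer segments are at distance at least
`(v - u) - 2r`, while the length of `α` between them is at most `(v - u) + 2r`, which is small
enough since `16r < v - u`.
-/

open Metric Set Pointwise
open scoped ENNReal

noncomputable section

/-- A shortest segment from `P` to a geodesic, followed by a piece of that geodesic, is a
`(3,0)`-quasi-geodesic: here `x` is a point on a geodesic from `P` to a nearest point `c`, and
`y` is a point no closer to `P` than `c` is. -/
lemma corner_bound {X : Type*} [MetricSpace X] {P x c y : X}
    (hx : dist P x + dist x c = dist P c) (hc : dist P c ≤ dist P y) :
    dist x c + dist c y ≤ 3 * dist x y := by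
  have h1 := dist_triangle P x y
  have h2 := dist_triangle c x y
  rw [dist_comm c x] at h2
  linarith

/-- Any two points of a geodesic space are joined by a geodesic defined on any prescribed
interval of the right length. -/
lemma IsGeodesicSpace.exists_on {X : Type*} [MetricSpace X] (hX : IsGeodesicSpace X)
    (x y : X) {p q : ℝ} (h : q - p = dist x y) :
    ∃ f : ℝ → X, f p = x ∧ f q = y ∧ IsGeodesicOn f p q := by
  obtain ⟨g, h0, h1, hg⟩ := hX x y
  refine ⟨fun t => g (t - p), by simpa using h0, by simpa [h] using h1, ?_⟩
  rintro s ⟨hs, hs'⟩ t ⟨ht, ht'⟩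
  have := hg (s - p) ⟨by linarith, by linarith⟩ (t - p) ⟨by linarith, by linarith⟩
  simpa using this

lemma IsGeodesicOn.dist_eq {X : Type*} [MetricSpace X] {f : ℝ → X} {p q s t : ℝ}
    (hf : IsGeodesicOn f p q) (hs : p ≤ s) (hst : s ≤ t) (ht : t ≤ q) :
    dist (f s) (f t) = t - s := by
  rw [hf s ⟨hs, hst.trans ht⟩ t ⟨hs.trans hst, ht⟩, abs_sub_comm,
    abs_of_nonneg (sub_nonneg.2 hst)]

/-- A geodesic attains its distance to any given point. -/
lemma IsGeodesicOn.exists_nearest {X : Type*} [MetricSpace X] {f : ℝ → X} {p q : ℝ}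
    (hf : IsGeodesicOn f p q) (hpq : p ≤ q) (P : X) :
    ∃ u ∈ Icc p q, ∀ t ∈ Icc p q, dist P (f u) ≤ dist P (f t) := by
  have hc : ContinuousOn f (Icc p q) := by
    refine (LipschitzOnWith.of_dist_le_mul (K := 1) fun s hs t ht => ?_).continuousOn
    rw [hf s hs t ht, Real.dist_eq]
    simp
  exact isCompact_Icc.exists_isMinOn (nonempty_Icc.2 hpq) 
    (f := fun t => dist P (f t)) (by fun_prop)

/-- By symmetry it suffices to check the quasi-isometry inequalities on ordered pairs. -/
lemma QIEmbedOn.of_le {X : Type*} [MetricSpace X] {α : ℝ → X} {A : Set ℝ}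
    (h : ∀ s ∈ A, ∀ t ∈ A, s ≤ t →
      t - s ≤ 5 * dist (α s) (α t) ∧ dist (α s) (α t) ≤ t - s) :
    QIEmbedOn α A 5 0 := by
  intro s hs t ht
  rcases le_total s t with hst | hst
  · obtain ⟨h1, h2⟩ := h s hs t ht hst
    rw [abs_sub_comm, abs_of_nonneg (sub_nonneg.2 hst)]
    constructor <;> linarith
  · obtain ⟨h1, h2⟩ := h t ht s hs hst
    rw [abs_of_nonneg (sub_nonneg.2 hst), dist_comm]
    constructor <;> linarith

/-- Quasi-geodesic approximation of a concatenation of three geodesics: if `γ` is the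
concatenation of geodesics `γ₁, γ₂, γ₃` (on `[a,m₁]`, `[m₁,m₂]`, `[m₂,b]`) with
`length γ₁ < r`, `length γ₂ = 20r`, `length γ₃ < r`, then there is a `(5,0)`-quasi-geodesic
`α` with the same endpoints as `γ` whose image meets the image of `γ₂`. -/
theorem quasigeodesic_through_middle_of_three_geodesics
    {X : Type*} [MetricSpace X] (hX : IsGeodesicSpace X)
    (γ : ℝ → X) (a m₁ m₂ b : ℝ) (h₁ : a ≤ m₁) (h₂ : m₁ ≤ m₂) (h₃ : m₂ ≤ b)
    (hg₁ : IsGeodesicOn γ a m₁) (hg₂ : IsGeodesicOn γ m₁ m₂) (hg₃ : IsGeodesicOn γ m₂ b)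
    (r : ℝ) (hr : 0 < r) (hl₁ : m₁ - a < r) (hl₂ : m₂ - m₁ = 20 * r) (hl₃ : b - m₂ < r) :
    ∃ (α : ℝ → X) (a' b' : ℝ), a' ≤ b' ∧ QIEmbedOn α (Icc a' b') 5 0 ∧
      α a' = γ a ∧ α b' = γ b ∧ (α '' Icc a' b' ∩ γ '' Icc m₁ m₂).Nonempty := by
  obtain ⟨u, ⟨hu1, hu2⟩, hu⟩ := hg₂.exists_nearest h₂ (γ a)
  obtain ⟨v, ⟨hv1, hv2⟩, hv⟩ := hg₂.exists_nearest h₂ (γ b)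
  have hp : dist (γ a) (γ u) < r := by
    have := hu m₁ ⟨le_rfl, h₂⟩
    rw [hg₁.dist_eq le_rfl h₁ le_rfl] at this
    linarith
  have hq : dist (γ b) (γ v) < r := by
    have := hv m₂ ⟨h₂, le_rfl⟩
    rw [dist_comm _ (γ m₂), hg₃.dist_eq le_rfl h₃ le_rfl] at this
    linarith
  have hu_lt : u - m₁ < 2 * r := by
    rw [← hg₂.dist_eq le_rfl hu1 hu2]
    have h4 := dist_triangle_left (γ m₁) (γ u) (γ a)
    rw [hg₁.dist_eq le_rfl h₁ le_rfl] at h4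
    linarith
  have hv_lt : m₂ - v < 2 * r := by
    rw [← hg₂.dist_eq hv1 hv2 le_rfl]
    have h4 := dist_triangle_left (γ v) (γ m₂) (γ b)
    rw [dist_comm (γ b) (γ m₂), hg₃.dist_eq le_rfl h₃ le_rfl] at h4
    linarith
  obtain ⟨p, hp_def⟩ : ∃ p, u - p = dist (γ a) (γ u) := ⟨u - dist (γ a) (γ u), by ring⟩
  obtain ⟨q, hq_def⟩ : ∃ q, q - v = dist (γ v) (γ b) := ⟨v + dist (γ v) (γ b), by ring⟩
  have hpu : p ≤ u := by linarith [dist_nonneg (x := γ a) (y := γ u)]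
  have hvq : v ≤ q := by linarith [dist_nonneg (x := γ v) (y := γ b)]
  have hqr : q - v < r := by rw [hq_def, dist_comm]; exact hq
  have huv : u < v := by linarith
  obtain ⟨f, hfp, hfu, hf⟩ := hX.exists_on _ _ hp_def
  obtain ⟨g, hgv, hgq, hg⟩ := hX.exists_on _ _ hq_def
  -- The nearest-point property of `γ u` and `γ v`, transported along the outer segments.
  have hcorner₁ : ∀ s t, p ≤ s → s ≤ u → u ≤ t → t ≤ v →
      t - s ≤ 3 * dist (f s) (γ t) := by
    intro s t hs hsu hut htv
    have h1 : dist (γ a) (f s) + dist (f s) (γ u) = dist (γ a) (γ u) := by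
      rw [← hp_def, ← hfp, ← hfu, hf.dist_eq le_rfl hs hsu, hf.dist_eq hs hsu le_rfl]
      ring
    have h2 := corner_bound h1 (hu t ⟨by linarith, by linarith⟩)
    rw [hg₂.dist_eq hu1 hut (by linarith), ← hfu, hf.dist_eq hs hsu le_rfl] at h2
    linarith
  have hcorner₂ : ∀ s t, u ≤ s → s ≤ v → v ≤ t → t ≤ q →
      t - s ≤ 3 * dist (γ s) (g t) := by
    intro s t hs hsv hvt htq
    have h1 : dist (γ b) (g t) + dist (g t) (γ v) = dist (γ b) (γ v) := by
      rw [dist_comm (γ b) (g t), dist_comm (g t) (γ v), dist_comm (γ b) (γ v), ← hq_def, ← hgv, ← hgq,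
        hg.dist_eq hvt htq le_rfl, hg.dist_eq le_rfl hvt htq]
      ring
    have h2 := corner_bound h1 (hv s ⟨by linarith, by linarith⟩)
    rw [dist_comm (γ v), hg₂.dist_eq (by linarith) hsv hv2, ← hgv, dist_comm (g t),
      hg.dist_eq le_rfl hvt htq, dist_comm (g t)] at h2
    linarith
  let α : ℝ → X := fun t => if t ≤ u then f t else if t ≤ v then γ t else g t
  have hα₁ : ∀ t, t ≤ u → α t = f t := fun t ht => if_pos ht
  have hα₂ : ∀ t, u ≤ t → t ≤ v → α t = γ t := by
    intro t ht ht'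
    rcases ht.eq_or_lt with rfl | ht
    · rw [hα₁ _ le_rfl, hfu]
    · simp [α, ht.not_ge, ht']
  have hα₃ : ∀ t, v ≤ t → α t = g t := by
    intro t ht
    rcases ht.eq_or_lt with rfl | ht
    · rw [hα₂ _ huv.le le_rfl, hgv]
    · simp [α, ht.not_ge, (huv.trans ht).not_ge]
  refine ⟨α, p, q, by linarith, QIEmbedOn.of_le ?_, by rw [hα₁ p hpu, hfp],
    by rw [hα₃ q hvq, hgq], γ u, ⟨u, ⟨hpu, by linarith⟩, hα₂ u le_rfl huv.le⟩,
    u, ⟨hu1, hu2⟩, rfl⟩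
  rintro s ⟨hs, -⟩ t ⟨-, ht⟩ hst
  rcases le_total t u with htu | hut
  · rw [hα₁ s (hst.trans htu), hα₁ t htu, hf.dist_eq hs hst htu]
    constructor <;> linarith
  rcases le_total v s with hvs | hsv
  · rw [hα₃ s hvs, hα₃ t (hvs.trans hst), hg.dist_eq hvs hst ht]
    constructor <;> linarith
  rcases le_total s u with hsu | hus
  · have e1 := hf.dist_eq hs hsu le_rfl
    rw [hfu] at e1
    rw [hα₁ s hsu]
    rcases le_total t v with htv | hvt
    · rw [hα₂ t hut htv]
      have h1 := hcorner₁ s t hs hsu hut htv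
      have h2 := dist_triangle (f s) (γ u) (γ t)
      rw [e1, hg₂.dist_eq hu1 hut (by linarith)] at h2
      constructor <;> linarith
    · -- Both outer pieces have length below `r`, against `16r < v - u` in the middle.
      rw [hα₃ t hvt]
      have e2 := hg.dist_eq le_rfl hvt ht
      rw [hgv] at e2
      have e3 := hg₂.dist_eq hu1 huv.le hv2
      have h1 := dist_triangle4 (f s) (γ u) (γ v) (g t)
      have h2 := dist_triangle4 (γ u) (f s) (g t) (γ v)
      rw [dist_comm (γ u) (f s), dist_comm (g t) (γ v)] at h2
      constructor <;> linarith
  · rw [hα₂ s hus hsv]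
    rcases le_total t v with htv | hvt
    · rw [hα₂ t hut htv, hg₂.dist_eq (by linarith) hst (by linarith)]
      constructor <;> linarith
    · rw [hα₃ t hvt]
      have e2 := hg.dist_eq le_rfl hvt ht
      rw [hgv] at e2
      have h1 := hcorner₂ s t hus hsv hvt ht
      have h2 := dist_triangle (γ s) (γ v) (g t)
      rw [e2, hg₂.dist_eq (by linarith) hsv hv2] at h2
      constructor <;> linarith
end
end

section
/- Suppose A, B, X are geodesic metric spaces and f : B → A and g : A → X are quasi-isometric embeddings. Then: (1) if (g∘f)(B) is a Morse subset of X, then f(B) is a Morse subset of A; and (2) if f(B) is a Morse subset of A and g(A) is a Morse subset of X, then (g∘f)(B) is a Morse subset of X. -/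
/-!
Quasi-isometric embeddings transport quasi-geodesics in both directions, with constants
depending only on the data.

For (1), a quasi-geodesic of `A` with endpoints on `f(B)` is pushed forward by `g` to one of
`X` (`QIEmbedOn.comp_qi`); it stays near `(g ∘ f)(B)`, and the lower inequality for `g`
(`QIEmbeddingWith.dist_le`) brings this closeness back to `A`.

For (2), a quasi-geodesic of `X` with endpoints on `(g ∘ f)(B)` stays near `g(A)`. Choosing for
each time a point of `A` whose image is nearby yields a quasi-geodesic of `A`
(`QIEmbedOn.of_near`), which can be chosen to have endpoints on `f(B)`; hence it stays near
`f(B)`, and applying `g` bounds the distance from the original path to `(g ∘ f)(B)`.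
-/

open Metric Set Pointwise
open scoped ENNReal

noncomputable section

/-- Distances in `A` are coarsely controlled from above by distances of the images. -/
lemma QIEmbeddingWith.dist_le {A X : Type*} [MetricSpace A] [MetricSpace X] {g : A → X}
    {k l : ℝ} (h : QIEmbeddingWith g k l) (x y : A) :
    dist x y ≤ k * (dist (g x) (g y) + l) := by
  obtain ⟨hk, -, h⟩ := h
  have hk0 : 0 < k := by linarith
  have h1 := (h x y).1
  rw [one_div, inv_mul_eq_div, sub_le_iff_le_add, div_le_iff₀ hk0] at h1
  linarith

/-- The image of a quasi-geodesic under a quasi-isometric embedding is a quasi-geodesic. -/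
lemma QIEmbedOn.comp_qi {A X : Type*} [MetricSpace A] [MetricSpace X] {g : A → X}
    {k l : ℝ} (h : QIEmbeddingWith g k l) {γ : ℝ → A} {s : Set ℝ} {K C : ℝ}
    (hC : 0 ≤ C) (hγ : QIEmbedOn γ s K C) :
    QIEmbedOn (g ∘ γ) s (k * K) (k * C + l) := by
  obtain ⟨hk, hl, h⟩ := h
  have hk0 : 0 < k := by linarith
  intro a ha b hb
  obtain ⟨h1, h2⟩ := hγ a ha b hb
  obtain ⟨h3, h4⟩ := h (γ a) (γ b)
  simp only [Function.comp_apply]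
  constructor
  · have e1 := mul_le_mul_of_nonneg_left h1 (one_div_pos.2 hk0).le
    have e2 : 1 / k * (1 / K * |a - b| - C) = 1 / (k * K) * |a - b| - 1 / k * C := by
      simp only [one_div, mul_inv]; ring
    have e3 : 1 / k * C ≤ k * C :=
      mul_le_mul_of_nonneg_right (((div_le_one hk0).2 hk).trans hk) hC
    linarith
  · have e1 := mul_le_mul_of_nonneg_left h2 hk0.le
    linarith

/-- A path in `A` whose image under a quasi-isometric embedding fellow-travels a
quasi-geodesic of `X` is itself a quasi-geodesic. -/
lemma QIEmbedOn.of_near {A X : Type*} [MetricSpace A] [MetricSpace X] {g : A → X}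
    {k l : ℝ} (h : QIEmbeddingWith g k l) {γ : ℝ → X} {α : ℝ → A} {s : Set ℝ} {K C D : ℝ}
    (hC : 0 ≤ C) (hD : 0 ≤ D) (hγ : QIEmbedOn γ s K C)
    (hα : ∀ t ∈ s, dist (γ t) (g (α t)) ≤ D) :
    QIEmbedOn α s (k * K) (k * (C + 2 * D + l)) := by
  have hup := h.dist_le
  obtain ⟨hk, hl, h⟩ := h
  have hk0 : 0 < k := by linarith
  intro a ha b hb
  obtain ⟨h1, h2⟩ := hγ a ha b hb
  have h4 := (h (α a) (α b)).2
  have h5 := hup (α a) (α b)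
  have da := hα a ha
  have db := hα b hb
  have t1 := dist_triangle4 (γ a) (g (α a)) (g (α b)) (γ b)
  have t2 := dist_triangle4 (g (α a)) (γ a) (γ b) (g (α b))
  rw [dist_comm (g (α b)) (γ b)] at t1
  rw [dist_comm (g (α a)) (γ a)] at t2
  constructor
  · have hE : 0 ≤ C + 2 * D + l := by linarith
    have e0 : 1 / K * |a - b| - (C + 2 * D + l) ≤ k * dist (α a) (α b) := by linarith
    have e1 := mul_le_mul_of_nonneg_left e0 (one_div_pos.2 hk0).le
    have e2 : 1 / k * (1 / K * |a - b| - (C + 2 * D + l)) =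
        1 / (k * K) * |a - b| - 1 / k * (C + 2 * D + l) := by
      simp only [one_div, mul_inv]; ring
    have e3 : 1 / k * (C + 2 * D + l) ≤ k * (C + 2 * D + l) :=
      mul_le_mul_of_nonneg_right (((div_le_one hk0).2 hk).trans hk) hE
    have e4 : 1 / k * (k * dist (α a) (α b)) = dist (α a) (α b) := by field_simp
    linarith
  · refine h5.trans ?_
    have : dist (g (α a)) (g (α b)) + l ≤ K * |a - b| + (C + 2 * D + l) := by linarith
    have := mul_le_mul_of_nonneg_left this hk0.le
    linarith

/-- A bound on `infDist` to a nonempty range is nearly attained. -/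
lemma exists_dist_le_of_infDist_range_le {A X : Type*} [MetricSpace X] {g : A → X} {x : X}
    {M : ℝ} (hne : (Set.range g).Nonempty) (h : infDist x (Set.range g) ≤ M) :
    ∃ a, dist x (g a) ≤ M + 1 := by
  have h' : infDist x (Set.range g) < M + 1 := by linarith
  obtain ⟨_, ⟨a, rfl⟩, ha⟩ := (infDist_lt_iff hne).1 h'
  exact ⟨a, ha.le⟩

/-- Strong quasiconvexity and compositions of quasi-isometric embeddings:
(1) if `B` is strongly quasiconvex in `X` via `g ∘ f`, then `B` is strongly quasiconvex in
`A` via `f`; (2) if `B` is strongly quasiconvex in `A` via `f` and `A` is strongly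
quasiconvex in `X` via `g`, then `B` is strongly quasiconvex in `X` via `g ∘ f`. -/
theorem morse_image_comp
    {A B X : Type*} [MetricSpace A] [MetricSpace B] [MetricSpace X]
    (hA : IsGeodesicSpace A) (hB : IsGeodesicSpace B) (hX : IsGeodesicSpace X)
    (f : B → A) (g : A → X) (hf : IsQIEmbedding f) (hg : IsQIEmbedding g) :
    (IsMorse (Set.range (g ∘ f)) → IsMorse (Set.range f)) ∧
    ((IsMorse (Set.range f) ∧ IsMorse (Set.range g)) → IsMorse (Set.range (g ∘ f))) := by
  obtain ⟨k, l, hg⟩ := hg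
  have hk : 1 ≤ k := hg.1
  have hl : 0 ≤ l := hg.2.1
  have hk0 : 0 ≤ k := by linarith
  constructor
  · intro hM K C hK hC
    obtain ⟨M, hM0, hM⟩ := hM (k * K) (k * C + l) (one_le_mul_of_one_le_of_one_le hk hK)
      (by positivity)
    refine ⟨k * (M + 1 + l), by positivity, fun γ a b hab hγ ha hb t ht => ?_⟩
    obtain ⟨p, hp⟩ := ha
    obtain ⟨q, hq⟩ := hb
    have h1 := hM (g ∘ γ) a b hab (hγ.comp_qi hg hC) ⟨p, by simp [hp]⟩ ⟨q, by simp [hq]⟩ t ht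
    obtain ⟨z, hz⟩ := exists_dist_le_of_infDist_range_le ⟨_, mem_range_self p⟩ h1
    simp only [Function.comp_apply] at hz
    calc infDist (γ t) (Set.range f) ≤ dist (γ t) (f z) := infDist_le_dist_of_mem ⟨z, rfl⟩
      _ ≤ k * (dist (g (γ t)) (g (f z)) + l) := hg.dist_le _ _
      _ ≤ k * (M + 1 + l) := by gcongr
  · rintro ⟨hF, hG⟩ K C hK hC
    obtain ⟨M, hM0, hM⟩ := hG K C hK hC
    obtain ⟨M', hM0', hM'⟩ := hF (k * K) (k * (C + 2 * (M + 1) + l))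
      (one_le_mul_of_one_le_of_one_le hk hK) (by positivity)
    refine ⟨(M + 1) + (k * (M' + 1) + l), by positivity, fun γ a b hab hγ ha hb t ht => ?_⟩
    obtain ⟨p, hp⟩ := ha
    obtain ⟨q, hq⟩ := hb
    simp only [Function.comp_apply] at hp hq
    have hnear := hM γ a b hab hγ ⟨f p, hp⟩ ⟨f q, hq⟩
    -- Lift `γ` coarsely to `A`, keeping both endpoints on `f(B)`.
    have hex : ∀ s : ℝ, ∃ x : A, (s ∈ Icc a b → dist (γ s) (g x) ≤ M + 1) ∧
        (s = a ∨ s = b → x ∈ Set.range f) := by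
      intro s
      by_cases hsa : s = a
      · refine ⟨f p, fun _ => ?_, fun _ => ⟨p, rfl⟩⟩
        rw [hsa, hp, dist_self]; positivity
      by_cases hsb : s = b
      · refine ⟨f q, fun _ => ?_, fun _ => ⟨q, rfl⟩⟩
        rw [hsb, hq, dist_self]; positivity
      by_cases hs : s ∈ Icc a b
      · obtain ⟨x, hx⟩ := exists_dist_le_of_infDist_range_le ⟨_, mem_range_self (f p)⟩ (hnear s hs)
        exact ⟨x, fun _ => hx, fun h => (h.elim hsa hsb).elim⟩
      · exact ⟨f p, fun h => (hs h).elim, fun _ => ⟨p, rfl⟩⟩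
    choose α hα hend using hex
    have hqi := QIEmbedOn.of_near hg hC (by positivity) hγ hα
    obtain ⟨z, hz⟩ := exists_dist_le_of_infDist_range_le ⟨_, mem_range_self p⟩
      (hM' α a b hab hqi (hend a (Or.inl rfl)) (hend b (Or.inr rfl)) t ht)
    calc infDist (γ t) (Set.range (g ∘ f)) ≤ dist (γ t) (g (f z)) :=
          infDist_le_dist_of_mem ⟨z, rfl⟩
      _ ≤ dist (γ t) (g (α t)) + dist (g (α t)) (g (f z)) := dist_triangle _ _ _
      _ ≤ (M + 1) + (k * dist (α t) (f z) + l) := add_le_add (hα t ht) (hg.2.2 _ _).2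
      _ ≤ (M + 1) + (k * (M' + 1) + l) := by gcongr
end
end

section
/- Let Γ be a finite simplicial graph with vertex set S, let G_Γ be the associated right-angled Coxeter group, and let K be the special subgroup of G_Γ generated by a subset S₁ of S. Suppose σ is an induced 4-cycle of Γ with two pairs of non-adjacent vertices (a₁,a₂) and (b₁,b₂) such that a₁ and a₂ both lie in S₁ but b₁ does not. Then for every positive integer n, d_S((b₁b₂)ⁿ, K) = 2n and d_S((b₁b₂)ⁿ b₁, K) = 2n + 1. -/
/-!
Killing every generator except `b₁` and `b₂` is a homomorphism of `RACG Γ` onto the infinite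
dihedral group, because `b₁` and `b₂` are not adjacent. That group acts on `ℤ` with `b₁` swapping
`-1, 0` (`x ↦ -1 - x`) and `b₂` swapping `0, 1` (`x ↦ 1 - x`), and no generator of `RACG Γ`
increases the absolute value of an integer by more than `1`; so a group element that sends `0`
to `m` has word length at least `|m|` (`natAbs_racgLineAct_le_wordLength`). Since `b₁ ∉ S₁`, the
subgroup generated by `S₁` acts through `{1, b₂}`, hence sends `0` into `{0, 1}`
(`racgLineAct_closure`). As `(b₂b₁)ⁿ` is the translation by `2n`, both `g⁻¹ * k` with
`g = (b₁b₂)ⁿ` and `g = (b₁b₂)ⁿ b₁` send `0` to an integer of absolute value at least `2n`,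
respectively `2n + 1`. The obvious words, with `k = 1`, give the upper bounds.
-/

open Metric Set Pointwise
open scoped ENNReal

noncomputable section

/-! ### The action of the group on the integers -/

/-- The reflection `x ↦ c - x` of the integers. -/
def intRefl (c : ℤ) : Equiv.Perm ℤ := Equiv.subLeft c

lemma intRefl_apply (c x : ℤ) : intRefl c x = c - x := rfl

lemma intRefl_mul_self (c : ℤ) : intRefl c * intRefl c = 1 := by
  ext x; simp [intRefl_apply]

section LineAction

variable {V : Type} (Γ : SimpleGraph V) (b₁ b₂ : V)

open Classical in
/-- The action of the generators on `ℤ`: `b₁` is `x ↦ -1 - x`, `b₂` is `x ↦ 1 - x`, and every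
other generator acts trivially. -/
def lineActGen (v : V) : Equiv.Perm ℤ :=
  if v = b₁ then intRefl (-1) else if v = b₂ then intRefl 1 else 1

lemma lineActGen_rels (hb : ¬ Γ.Adj b₁ b₂) :
    ∀ r ∈ racgRels Γ, FreeGroup.lift (lineActGen b₁ b₂) r = 1 := by
  rintro r (⟨v, rfl⟩ | ⟨v, w, hvw, rfl⟩)
  · simp only [map_mul, FreeGroup.lift_apply_of, lineActGen]
    split_ifs <;> simp [intRefl_mul_self]
  · have hb' : ¬ Γ.Adj b₂ b₁ := fun h => hb h.symm
    have hcomm : Commute (lineActGen b₁ b₂ v) (lineActGen b₁ b₂ w) := by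
      unfold lineActGen
      split_ifs <;> first | exact Commute.one_left _ | exact Commute.one_right _ |
        exact Commute.refl _ | (subst_vars; contradiction)
    simp only [map_mul, map_inv, FreeGroup.lift_apply_of]
    rw [hcomm.eq]
    group

/-- The action of `RACG Γ` on `ℤ` through the infinite dihedral group generated by two
non-adjacent vertices. -/
def racgLineAct (hb : ¬ Γ.Adj b₁ b₂) : RACG Γ →* Equiv.Perm ℤ :=
  PresentedGroup.toGroup (lineActGen_rels Γ b₁ b₂ hb)

variable {Γ b₁ b₂}

lemma racgLineAct_gen (hb : ¬ Γ.Adj b₁ b₂) (v : V) :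
    racgLineAct Γ b₁ b₂ hb (racgGen Γ v) = lineActGen b₁ b₂ v :=
  PresentedGroup.toGroup.of _

lemma racgGen_mul_self (v : V) : racgGen Γ v * racgGen Γ v = 1 := by
  have h : PresentedGroup.mk (racgRels Γ) (FreeGroup.of v * FreeGroup.of v) = 1 :=
    PresentedGroup.one_of_mem (Or.inl ⟨v, rfl⟩)
  simpa [racgGen, PresentedGroup.of] using h

lemma racgGen_inv (v : V) : (racgGen Γ v)⁻¹ = racgGen Γ v :=
  inv_eq_of_mul_eq_one_left (racgGen_mul_self v)

lemma natAbs_lineActGen_le (v : V) (x : ℤ) :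
    (lineActGen b₁ b₂ v x).natAbs ≤ x.natAbs + 1 := by
  unfold lineActGen
  split_ifs <;> simp only [intRefl_apply, Equiv.Perm.one_apply] <;> omega

lemma natAbs_racgLineAct_prod_le (hb : ¬ Γ.Adj b₁ b₂) (w : List (RACG Γ))
    (hw : ∀ x ∈ w, x ∈ Set.range (racgGen Γ) ∨ x⁻¹ ∈ Set.range (racgGen Γ)) :
    (racgLineAct Γ b₁ b₂ hb w.prod 0).natAbs ≤ w.length := by
  induction w with
  | nil => simp
  | cons x w ih =>
    have ih' := ih fun y hy => hw y (List.mem_cons_of_mem _ hy)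
    obtain ⟨v, rfl⟩ : x ∈ Set.range (racgGen Γ) := by
      rcases hw x List.mem_cons_self with h | ⟨v, hv⟩
      · exact h
      · exact ⟨v, by rw [← inv_inv x, ← hv, racgGen_inv]⟩
    have := natAbs_lineActGen_le (b₁ := b₁) (b₂ := b₂) v (racgLineAct Γ b₁ b₂ hb w.prod 0)
    rw [List.prod_cons, map_mul, Equiv.Perm.mul_apply, racgLineAct_gen, List.length_cons]
    omega

/-- The vertices generate, so the infimum defining the word length is attained and the bound for
words passes to group elements. -/
lemma natAbs_racgLineAct_le_wordLength (hb : ¬ Γ.Adj b₁ b₂) (g : RACG Γ) :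
    (racgLineAct Γ b₁ b₂ hb g 0).natAbs ≤ wordLength (Set.range (racgGen Γ)) g := by
  have hg : g ∈ Subgroup.closure (Set.range (racgGen Γ)) := by
    have h : Subgroup.closure (Set.range (racgGen Γ)) = ⊤ :=
      PresentedGroup.closure_range_of (racgRels Γ)
    rw [h]; trivial
  rw [← Subgroup.mem_toSubmonoid, Subgroup.closure_toSubmonoid] at hg
  obtain ⟨w₀, hw₀, hp₀⟩ := Submonoid.exists_list_of_mem_closure hg
  have hne : {n : ℕ | ∃ w : List (RACG Γ), w.length = n ∧
      (∀ x ∈ w, x ∈ Set.range (racgGen Γ) ∨ x⁻¹ ∈ Set.range (racgGen Γ)) ∧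
      w.prod = g}.Nonempty := ⟨_, w₀, rfl, hw₀, hp₀⟩
  obtain ⟨w, hlen, hw, hp⟩ := Nat.sInf_mem hne
  have := natAbs_racgLineAct_prod_le hb w hw
  rw [hp, hlen] at this
  exact this

lemma racgLineAct_closure (hb : ¬ Γ.Adj b₁ b₂) {S₁ : Set V} (hb₁ : b₁ ∉ S₁) {k : RACG Γ}
    (hk : k ∈ Subgroup.closure (racgGen Γ '' S₁)) :
    racgLineAct Γ b₁ b₂ hb k = 1 ∨ racgLineAct Γ b₁ b₂ hb k = intRefl 1 := by
  induction hk using Subgroup.closure_induction with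
  | mem x hx =>
    obtain ⟨v, hv, rfl⟩ := hx
    have hvb : v ≠ b₁ := fun h => hb₁ (h ▸ hv)
    rw [racgLineAct_gen, lineActGen, if_neg hvb]
    split_ifs <;> simp
  | one => simp
  | mul x y _ _ hx hy =>
    rw [map_mul]
    rcases hx with hx | hx <;> rcases hy with hy | hy <;> simp [hx, hy, intRefl_mul_self]
  | inv x _ hx =>
    rw [map_inv]
    rcases hx with hx | hx
    · simp [hx]
    · exact Or.inr (by rw [hx]; exact inv_eq_of_mul_eq_one_left (intRefl_mul_self 1))

lemma racgLineAct_pow_apply (hb : ¬ Γ.Adj b₁ b₂) (hne : b₁ ≠ b₂) (n : ℕ) (x : ℤ) :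
    racgLineAct Γ b₁ b₂ hb ((racgGen Γ b₂ * racgGen Γ b₁) ^ n) x = x + 2 * n := by
  induction n with
  | zero => simp
  | succ n ih =>
    rw [pow_succ', map_mul, Equiv.Perm.mul_apply, ih, map_mul, Equiv.Perm.mul_apply,
      racgLineAct_gen, racgLineAct_gen, lineActGen, lineActGen, if_neg hne.symm, if_pos rfl,
      if_pos rfl, intRefl_apply, intRefl_apply]
    push_cast
    ring

end LineAction

/-! ### Word length and distance to a subgroup -/

/-- A product of `m` letters from `S` has word length at most `m`. -/
lemma wordLength_prod_le {G : Type*} [Group G] {S : Set G} (w : List G) (hw : ∀ x ∈ w, x ∈ S) :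
    wordLength S w.prod ≤ w.length :=
  Nat.sInf_le ⟨w, rfl, fun x hx => Or.inl (hw x hx), rfl⟩

/-- The distance from `g` to a subgroup `K` is `m` as soon as the inverse of `g` has length at
most `m` and no element of the coset `g⁻¹K` is shorter than `m`. -/
lemma wordDistToSet_eq {G : Type*} [Group G] {S : Set G} {g : G} {K : Subgroup G} {m : ℕ}
    (hle : wordLength S g⁻¹ ≤ m) (hge : ∀ k ∈ K, m ≤ wordLength S (g⁻¹ * k)) :
    wordDistToSet S g (K : Set G) = m := by
  have hmem : wordLength S g⁻¹ ∈ {n : ℕ | ∃ a ∈ (K : Set G), wordLength S (g⁻¹ * a) = n} :=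
    ⟨1, K.one_mem, by rw [mul_one]⟩
  apply le_antisymm ((Nat.sInf_le hmem).trans hle)
  obtain ⟨k, hk, h⟩ := Nat.sInf_mem ⟨_, hmem⟩
  exact (hge k hk).trans h.le

/-- If `σ` is an induced `4`-cycle `a₁ b₁ a₂ b₂` of `Γ` with `a₁, a₂ ∈ S₁` and `b₁ ∉ S₁`,
then in the right-angled Coxeter group `G_Γ` the distances of `(b₁b₂)ⁿ` and `(b₁b₂)ⁿ b₁`
to the special subgroup `K = ⟨S₁⟩` are `2n` and `2n+1` respectively. -/
theorem racg_distance_to_special_subgroup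
    {V : Type} [Fintype V] (Γ : SimpleGraph V) (S₁ : Set V)
    (a₁ b₁ a₂ b₂ : V) (hcyc : InducedFourCycle Γ a₁ b₁ a₂ b₂)
    (ha₁ : a₁ ∈ S₁) (ha₂ : a₂ ∈ S₁) (hb₁ : b₁ ∉ S₁) :
    ∀ n : ℕ, 0 < n →
      wordDistToSet (Set.range (racgGen Γ)) ((racgGen Γ b₁ * racgGen Γ b₂) ^ n)
        ((Subgroup.closure (racgGen Γ '' S₁) : Subgroup (RACG Γ)) : Set (RACG Γ)) = 2 * n ∧
      wordDistToSet (Set.range (racgGen Γ)) ((racgGen Γ b₁ * racgGen Γ b₂) ^ n * racgGen Γ b₁)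
        ((Subgroup.closure (racgGen Γ '' S₁) : Subgroup (RACG Γ)) : Set (RACG Γ)) = 2 * n + 1 := by
  obtain ⟨-, -, -, -, hne, -, -, -, -, -, -, hb⟩ := hcyc
  intro n _
  have hinv : ((racgGen Γ b₁ * racgGen Γ b₂) ^ n)⁻¹ = (racgGen Γ b₂ * racgGen Γ b₁) ^ n := by
    rw [← inv_pow, mul_inv_rev, racgGen_inv, racgGen_inv]
  have hinv' : ((racgGen Γ b₁ * racgGen Γ b₂) ^ n * racgGen Γ b₁)⁻¹ =
      racgGen Γ b₁ * (racgGen Γ b₂ * racgGen Γ b₁) ^ n := by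
    rw [mul_inv_rev, hinv, racgGen_inv]
  obtain ⟨w, hlen, hw, hp⟩ : ∃ w : List (RACG Γ), w.length = 2 * n ∧
      (∀ x ∈ w, x ∈ Set.range (racgGen Γ)) ∧
      w.prod = (racgGen Γ b₂ * racgGen Γ b₁) ^ n := by
    refine ⟨(List.replicate n [racgGen Γ b₂, racgGen Γ b₁]).flatten, ?_, ?_, ?_⟩
    · simp [mul_comm]
    · intro x hx
      obtain ⟨l, hl, hxl⟩ := List.mem_flatten.1 hx
      rw [List.eq_of_mem_replicate hl] at hxl
      simp only [List.mem_cons, List.not_mem_nil, or_false] at hxl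
      rcases hxl with rfl | rfl <;> exact ⟨_, rfl⟩
    · simp [List.prod_flatten]
  have hk₀ : ∀ k ∈ Subgroup.closure (racgGen Γ '' S₁),
      racgLineAct Γ b₁ b₂ hb k 0 = 0 ∨ racgLineAct Γ b₁ b₂ hb k 0 = 1 := by
    intro k hk
    rcases racgLineAct_closure hb hb₁ hk with h | h <;> simp [h, intRefl_apply]
  constructor
  · refine wordDistToSet_eq ?_ fun k hk => ?_
    · rw [hinv, ← hp, ← hlen]
      exact wordLength_prod_le w hw
    · refine le_trans ?_ (natAbs_racgLineAct_le_wordLength hb _)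
      rw [hinv, map_mul, Equiv.Perm.mul_apply, racgLineAct_pow_apply hb hne]
      rcases hk₀ k hk with h | h <;> rw [h] <;> omega
  · refine wordDistToSet_eq ?_ fun k hk => ?_
    · rw [hinv', ← hp, ← hlen, ← List.prod_cons, ← List.length_cons]
      exact wordLength_prod_le _ (List.forall_mem_cons.2 ⟨⟨_, rfl⟩, hw⟩)
    · refine le_trans ?_ (natAbs_racgLineAct_le_wordLength hb _)
      rw [hinv', map_mul, map_mul, Equiv.Perm.mul_apply, Equiv.Perm.mul_apply,
        racgLineAct_pow_apply hb hne, racgLineAct_gen, lineActGen, if_pos rfl, intRefl_apply]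
      rcases hk₀ k hk with h | h <;> rw [h] <;> omega
end
end
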